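/- For every natural number n ≥ 1 and all x, y ∈ I_n = {1, 2, …, n}, d(x,y) ≤ ξ₂(n) + ξ₃(n), where ξ₂(n) and ξ₃(n) are the integer parts of the base-2 and base-3 logarithms of n respectively. -/

import Mathlib

/-- Ω(n): the number of prime factors of n counted with multiplicity. -/
def Omega (n : ℕ) : ℕ := n.primeFactorsList.length

/-- The arithmetic distance d(a,b) = Ω(lcm(a,b)) − Ω(gcd(a,b)). -/
def arithDist (a b : ℕ) : ℕ := Omega (Nat.lcm a b) - Omega (Nat.gcd a b)

/-!
Dividing `x` and `y` by their gcd leaves coprime `a` and `b` with `d(x, y) = Ω(a) + Ω(b)`. At least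
one of `a`, `b` is odd, so all its prime factors are at least `3` and its `Ω` is at most `log₃ n`;
the other contributes at most `log₂ n`.
-/

theorem Omega_zero : Omega 0 = 0 := ArithmeticFunction.cardFactors_zero

theorem Omega_one : Omega 1 = 0 := ArithmeticFunction.cardFactors_one

theorem Omega_mul {a b : ℕ} (ha : a ≠ 0) (hb : b ≠ 0) : Omega (a * b) = Omega a + Omega b :=
  ArithmeticFunction.cardFactors_mul ha hb

theorem pow_Omega_le {k m : ℕ} (hm : m ≠ 0) (hk : ∀ p, p.Prime → p ∣ m → k ≤ p) :
    k ^ Omega m ≤ m :=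
  calc k ^ Omega m ≤ m.primeFactorsList.prod :=
        List.pow_card_le_prod _ _ fun p hp ↦
          hk p (Nat.prime_of_mem_primeFactorsList hp) (Nat.dvd_of_mem_primeFactorsList hp)
    _ = m := Nat.prod_primeFactorsList hm

theorem Omega_le_log {k m : ℕ} (hk₁ : 1 < k) (hk : ∀ p, p.Prime → p ∣ m → k ≤ p) :
    Omega m ≤ Nat.log k m := by
  obtain rfl | hm := eq_or_ne m 0
  · simp only [Omega_zero, zero_le]
  · exact Nat.le_log_of_pow_le hk₁ (pow_Omega_le hm hk)

theorem Omega_le_log_two (m : ℕ) : Omega m ≤ Nat.log 2 m :=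
  Omega_le_log one_lt_two fun _ hp _ ↦ hp.two_le

theorem Omega_le_log_three_of_odd {m : ℕ} (hm : Odd m) : Omega m ≤ Nat.log 3 m :=
  Omega_le_log (by norm_num) fun _ hp hpm ↦
    hp.two_le.lt_of_ne fun h ↦ hm.not_two_dvd_nat (h ▸ hpm)

theorem Omega_add_Omega_le_of_odd_right {a b n : ℕ} (hb : Odd b) (han : a ≤ n) (hbn : b ≤ n) :
    Omega a + Omega b ≤ Nat.log 2 n + Nat.log 3 n :=
  add_le_add ((Omega_le_log_two a).trans (Nat.log_mono_right han))
    ((Omega_le_log_three_of_odd hb).trans (Nat.log_mono_right hbn))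

theorem Omega_add_Omega_le_of_coprime {a b n : ℕ} (hab : a.Coprime b) (han : a ≤ n)
    (hbn : b ≤ n) : Omega a + Omega b ≤ Nat.log 2 n + Nat.log 3 n := by
  obtain ha | ha := a.even_or_odd
  · have hb : Odd b := Nat.coprime_two_left.mp (hab.coprime_dvd_left ha.two_dvd)
    exact Omega_add_Omega_le_of_odd_right hb han hbn
  · rw [add_comm (Omega a)]
    exact Omega_add_Omega_le_of_odd_right ha hbn han

theorem arithDist_mul_left {g a b : ℕ} (hg : g ≠ 0) (ha : a ≠ 0) (hb : b ≠ 0) :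
    arithDist (g * a) (g * b) = arithDist a b := by
  rw [arithDist, Nat.lcm_mul_left, Nat.gcd_mul_left, Omega_mul hg (Nat.lcm_ne_zero ha hb),
    Omega_mul hg (Nat.gcd_ne_zero_left ha), Nat.add_sub_add_left, arithDist]

theorem arithDist_of_coprime {a b : ℕ} (ha : a ≠ 0) (hb : b ≠ 0) (hab : a.Coprime b) :
    arithDist a b = Omega a + Omega b := by
  rw [arithDist, hab.lcm_eq_mul, hab.gcd_eq_one, Omega_mul ha hb, Omega_one, Nat.sub_zero]

theorem arithDist_eq_Omega_div_gcd_add {x y : ℕ} (hx : 0 < x) (hy : 0 < y) :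
    arithDist x y = Omega (x / x.gcd y) + Omega (y / x.gcd y) := by
  have hg : 0 < x.gcd y := Nat.gcd_pos_of_pos_left y hx
  have ha : x / x.gcd y ≠ 0 := (Nat.div_gcd_pos_of_pos_left y hx).ne'
  have hb : y / x.gcd y ≠ 0 := (Nat.div_gcd_pos_of_pos_right x hy).ne'
  calc arithDist x y
      = arithDist (x.gcd y * (x / x.gcd y)) (x.gcd y * (y / x.gcd y)) := by
        rw [Nat.mul_div_cancel' (Nat.gcd_dvd_left x y), Nat.mul_div_cancel' (Nat.gcd_dvd_right x y)]
    _ = arithDist (x / x.gcd y) (y / x.gcd y) := arithDist_mul_left hg.ne' ha hb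
    _ = Omega (x / x.gcd y) + Omega (y / x.gcd y) :=
        arithDist_of_coprime ha hb (Nat.coprime_div_gcd_div_gcd hg)

theorem arithDist_le_log_add_log (n : ℕ) (hn : 1 ≤ n) (x y : ℕ)
    (hx : x ∈ Set.Icc 1 n) (hy : y ∈ Set.Icc 1 n) :
    arithDist x y ≤ Nat.log 2 n + Nat.log 3 n := by
  obtain ⟨hx₁, hxn⟩ := hx
  obtain ⟨hy₁, hyn⟩ := hy
  rw [arithDist_eq_Omega_div_gcd_add hx₁ hy₁]
  exact Omega_add_Omega_le_of_coprime
    (Nat.coprime_div_gcd_div_gcd (Nat.gcd_pos_of_pos_left y hx₁))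
    ((Nat.div_le_self x _).trans hxn) ((Nat.div_le_self y _).trans hyn)
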